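/- arXiv:2308.09374 — 4 statements merged into one kernel-verified Lean document; each statement's English description precedes it below -/
import Mathlib

section
/- Consider the fully connected sign network with i.i.d. standard normal weights: ω_0 = ω ∈ {-1,1}^n, ω_t = sign(θ_t ω_{t-1}) for t = 1,...,T_n, with θ_t independent n×n matrices of i.i.d. N(0,1) entries, and f_{n,T_n}(ω) = h_n(ω_{T_n}). If the (deterministic) sequence of Boolean functions {h_n} is noise stable and the depths T_n are bounded, then the random functions {f_{n,T_n}} are annealed (and hence quenched) noise stable. -/
open Finset Filter MeasureTheory ProbabilityTheory

noncomputable section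

/-- The ±1 real value of a Boolean bit. -/
def chi (b : Bool) : ℝ := if b then 1 else -1

/-- The joint probability of the pair `(ω, ω^ε)`, where `ω` is uniform on `{-1,1}^n` and
`ω^ε` flips each bit of `ω` independently with probability `ε`. -/
def pairWeight (n : ℕ) (ε : ℝ) (ω η : Fin n → Bool) : ℝ :=
  (1 / 2) ^ n * ∏ i, (if ω i = η i then 1 - ε else ε)

/-- Expectation of `g ω` for `ω` uniform on `{-1,1}^n`. -/
def unifMean (n : ℕ) (g : (Fin n → Bool) → ℝ) : ℝ := (∑ ω, g ω) / 2 ^ n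

/-- Expectation of `F ω ω^ε` over the correlated pair `(ω, ω^ε)`. -/
def pairMean (n : ℕ) (ε : ℝ) (F : (Fin n → Bool) → (Fin n → Bool) → ℝ) : ℝ :=
  ∑ ω, ∑ η, pairWeight n ε ω η * F ω η

/-- `Cov_{ω,ω^ε}(g(ω), g(ω^ε))` for a fixed real-valued function `g` on the cube. -/
def noiseCov (n : ℕ) (ε : ℝ) (g : (Fin n → Bool) → ℝ) : ℝ :=
  pairMean n ε (fun ω η => g ω * g η) - unifMean n g ^ 2

/-- `P_{ω,ω^ε}(f(ω) ≠ f(ω^ε))` for a fixed Boolean function `f`. -/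
def disagreeProb (n : ℕ) (ε : ℝ) (f : (Fin n → Bool) → Bool) : ℝ :=
  pairMean n ε (fun ω η => if f ω = f η then 0 else 1)

/-- The sign function with the convention `sgn z = 1` if `z > 0` and `-1` otherwise. -/
def sgn (x : ℝ) : ℝ := if 0 < x then 1 else -1

/-- One layer of the sign network: `x ↦ sign(θ x)`, coordinatewise. -/
def layerMap (n : ℕ) (θ : Fin n → Fin n → ℝ) (x : Fin n → ℝ) : Fin n → ℝ :=
  fun i => sgn (∑ j, θ i j * x j)

/-- The full network: `ω_T` obtained from `ω_0 = x` by `ω_t = sign(θ_t ω_{t-1})`. -/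
def network (n T : ℕ) (Θ : Fin T → Fin n → Fin n → ℝ) (x : Fin n → ℝ) : Fin n → ℝ :=
  (List.ofFn Θ).foldl (fun y θ => layerMap n θ y) x

/-- The Boolean output `f_{n,T}(ω) = h(ω_T)` of the network. -/
def boolOut (n T : ℕ) (h : (Fin n → Bool) → Bool) (Θ : Fin T → Fin n → Fin n → ℝ)
    (ω : Fin n → Bool) : Bool :=
  h fun i => decide (0 < network n T Θ (fun j => chi (ω j)) i)

/-- The ±1-valued output of the network. -/
def netOut (n T : ℕ) (h : (Fin n → Bool) → Bool) (Θ : Fin T → Fin n → Fin n → ℝ)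
    (ω : Fin n → Bool) : ℝ :=
  chi (boolOut n T h Θ ω)

/-- The law of the i.i.d. standard normal weights `Θ = (θ_1, ..., θ_T)`. -/
def weightMeas (n T : ℕ) : Measure (Fin T → Fin n → Fin n → ℝ) :=
  Measure.pi fun _ => Measure.pi fun _ => Measure.pi fun _ => gaussianReal 0 1

/-- The annealed covariance `Cov_{Θ,ω,ω^ε}(f_{n,T}(ω), f_{n,T}(ω^ε))`. -/
def annealedCov (n T : ℕ) (ε : ℝ) (h : (Fin n → Bool) → Bool) : ℝ :=
  (∫ Θ, pairMean n ε (fun ω η => netOut n T h Θ ω * netOut n T h Θ η) ∂weightMeas n T)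
    - (∫ Θ, unifMean n (netOut n T h Θ) ∂weightMeas n T) ^ 2

/-! ### Helper material -/

/-- Law of one row of weights. -/
def nuRow (n : ℕ) : Measure (Fin n → ℝ) := Measure.pi fun _ => gaussianReal 0 1

instance nuRow_prob (n : ℕ) : IsProbabilityMeasure (nuRow n) := by
  unfold nuRow; infer_instance

lemma nuRow_gauss (n : ℕ) (c : Fin n → ℝ) :
    HasGaussianLaw (fun v : Fin n → ℝ => ∑ j, v j * c j) (nuRow n) := by
  have hind : iIndepFun (fun (j : Fin n) (v : Fin n → ℝ) => v j * c j) (nuRow n) :=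
    iIndepFun_pi (X := fun (j : Fin n) (x : ℝ) => x * c j) (fun j => by fun_prop)
  refine hind.hasGaussianLaw_fun_sum (fun j => ?_)
  have h1 : HasLaw (fun v : Fin n → ℝ => v j) (gaussianReal 0 1) (nuRow n) :=
    ⟨(measurable_pi_apply j).aemeasurable, (measurePreserving_eval (fun _ : Fin n => gaussianReal 0 1) j).map_eq⟩
  have h2 := (h1.hasGaussianLaw).fun_smul (c j)
  simpa [mul_comm] using h2

lemma nuRow_mean (n : ℕ) (c : Fin n → ℝ) :
    ∫ v, (∑ j, v j * c j) ∂(nuRow n) = 0 := by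
  have hm (j : Fin n) := measurePreserving_eval (fun _ : Fin n => gaussianReal 0 1) j
  rw [integral_finsetSum]
  · refine Finset.sum_eq_zero fun j _ => ?_
    rw [integral_mul_const]
    have : ∫ v, v j ∂(nuRow n) = ∫ x, x ∂(gaussianReal 0 1) := by
      rw [← (hm j).map_eq, integral_map]
      · rfl
      · exact (measurable_pi_apply j).aemeasurable
      · fun_prop
    rw [this, integral_id_gaussianReal, zero_mul]
  · intro j _
    refine Integrable.mul_const ?_ _
    have h := (memLp_id_gaussianReal (μ := 0) (v := 1) 1).integrable (by simp)
    exact (hm j).integrable_comp_of_integrable h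

lemma nuRow_var (n : ℕ) (c : Fin n → ℝ) :
    Var[fun v : Fin n → ℝ => ∑ j, v j * c j; nuRow n] = ∑ j, c j ^ 2 := by
  have := variance_sum_pi (μ := fun _ : Fin n => gaussianReal 0 1)
    (X := fun (j : Fin n) (x : ℝ) => x * c j) (fun j => by
      have := (memLp_id_gaussianReal (μ := 0) (v := 1) 2)
      exact this.mul_const (c j))
  have e : (∑ i, fun ω : Fin n → ℝ ↦ ω i * c i) = fun v => ∑ j, v j * c j := by
    ext v; simp
  rw [e] at this
  rw [nuRow, this]
  refine Finset.sum_congr rfl fun j _ => ?_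
  have h := variance_mul_const (c j) (fun x : ℝ => x) (gaussianReal 0 1)
  rw [h]
  simp

lemma nuRow_law (n : ℕ) (c : Fin n → ℝ) :
    (nuRow n).map (fun v => ∑ j, v j * c j) = gaussianReal 0 (∑ j, c j ^ 2).toNNReal := by
  rw [(nuRow_gauss n c).map_eq_gaussianReal, nuRow_mean, nuRow_var]

lemma nuRow_tail (n : ℕ) (c : Fin n → ℝ) (a : ℝ) (ha : 0 < a) :
    (nuRow n).real {v | a ≤ |∑ j, v j * c j|} ≤ (∑ j, c j ^ 2) / a ^ 2 := by
  have := meas_ge_le_variance_div_sq (nuRow_gauss n c).memLp_two ha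
  rw [nuRow_mean, nuRow_var] at this
  simp only [sub_zero] at this
  exact ENNReal.toReal_le_of_le_ofReal (by positivity) this

lemma gauss_small (v : NNReal) (hv : v ≠ 0) (a : ℝ) (ha : 0 ≤ a) :
    (gaussianReal 0 v) (Set.Icc (-a) a) ≤ ENNReal.ofReal (a / √v) := by
  have hv' : (0 : ℝ) < v := by positivity
  rw [gaussianReal_apply_eq_integral _ hv]
  apply ENNReal.ofReal_le_ofReal
  have hb : ∀ x, gaussianPDFReal 0 v x ≤ (√v)⁻¹ / 2 := by
    intro x
    rw [gaussianPDFReal]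
    have h1 : Real.exp (-(x - 0) ^ 2 / (2 * v)) ≤ 1 := by
      apply Real.exp_le_one_iff.2
      apply div_nonpos_of_nonpos_of_nonneg
      · nlinarith [sq_nonneg (x - 0)]
      · positivity
    have h2 : 2 * √v ≤ √(2 * Real.pi * v) := by
      apply Real.le_sqrt_of_sq_le
      rw [mul_pow, Real.sq_sqrt hv'.le]
      nlinarith [Real.pi_gt_three]
    have h3 : 0 < √(v : ℝ) := Real.sqrt_pos.2 hv'
    calc (√(2 * Real.pi * v))⁻¹ * Real.exp (-(x - 0) ^ 2 / (2 * v))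
        ≤ (√(2 * Real.pi * v))⁻¹ * 1 := by gcongr
      _ ≤ (2 * √v)⁻¹ := by rw [mul_one]; gcongr
      _ = (√v)⁻¹ / 2 := by field_simp
  calc ∫ x in Set.Icc (-a) a, gaussianPDFReal 0 v x
      ≤ ∫ x in Set.Icc (-a) a, (√v)⁻¹ / 2 := by
        apply setIntegral_mono_on
        · exact (integrable_gaussianPDFReal _ _).integrableOn
        · simp
        · exact measurableSet_Icc
        · intro x _; exact hb x
    _ = a / √v := by
        simp [measureReal_def, ha]
        ring

lemma chi_sq (b : Bool) : chi b ^ 2 = 1 := by cases b <;> simp [chi]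

lemma nuRow_small (n : ℕ) (hn : 0 < n) (ω : Fin n → Bool) (s : ℝ) (hs : 0 ≤ s) :
    (nuRow n).real {v | |∑ j, v j * chi (ω j)| ≤ s * √n} ≤ s := by
  have hl := nuRow_law n (fun j => chi (ω j))
  simp only [chi_sq, sum_const, card_univ, Fintype.card_fin, nsmul_eq_mul, mul_one] at hl
  have h1 := gauss_small (n : ℝ).toNNReal (by simp; omega) (s * √n) (by positivity)
  rw [← hl, Measure.map_apply (by fun_prop) measurableSet_Icc] at h1
  have e : ((fun v : Fin n → ℝ => ∑ j, v j * chi (ω j)) ⁻¹' Set.Icc (-(s * √n)) (s * √n))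
      = {v | |∑ j, v j * chi (ω j)| ≤ s * √n} := by
    ext v; simp [abs_le]
  rw [e] at h1
  refine ENNReal.toReal_le_of_le_ofReal hs (h1.trans_eq ?_)
  have : 0 < √(n : ℝ) := by positivity
  simp
  congr 1
  field_simp

lemma nuRow_ne_zero (n : ℕ) (hn : 0 < n) (ω : Fin n → Bool) :
    ∀ᵐ v ∂(nuRow n), ∑ j, v j * chi (ω j) ≠ 0 := by
  have h0 := nuRow_small n hn ω 0 le_rfl
  have h1 : (nuRow n).real {v | |∑ j, v j * chi (ω j)| ≤ 0 * √n} = 0 :=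
    le_antisymm h0 measureReal_nonneg
  rw [measureReal_eq_zero_iff] at h1
  rw [ae_iff]
  simpa using h1

/-- Sign bit of one row. -/
def rowBit (n : ℕ) (ω : Fin n → Bool) (v : Fin n → ℝ) : Bool :=
  decide (0 < ∑ j, v j * chi (ω j))

lemma measurable_rowBit (n : ℕ) (ω : Fin n → Bool) : Measurable (rowBit n ω) := by
  apply measurable_to_bool
  have : rowBit n ω ⁻¹' {true} = {v | 0 < ∑ j, v j * chi (ω j)} := by
    ext v; simp [rowBit]
  rw [this]
  exact measurableSet_lt (by fun_prop) (by fun_prop)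

/-- The flip probability of a layer. -/
def flipP (n : ℕ) (ω η : Fin n → Bool) : ℝ :=
  (nuRow n).real {v | rowBit n ω v ≠ rowBit n η v}

/-- Joint law of bits in a row. -/
def rowQ (n : ℕ) (ω η : Fin n → Bool) (a b : Bool) : ℝ :=
  (nuRow n).real {v | rowBit n ω v = a ∧ rowBit n η v = b}

lemma nuRow_neg (n : ℕ) : (nuRow n).map (fun v => -v) = nuRow n := by
  have h := Measure.pi_map_pi (μ := fun _ : Fin n => gaussianReal 0 1)
    (f := fun _ (x : ℝ) => -x) (fun _ => by fun_prop)
  simp only [gaussianReal_map_neg, neg_zero] at h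
  exact h

lemma measurableSet_rowQ (n : ℕ) (ω η : Fin n → Bool) (a b : Bool) :
    MeasurableSet {v | rowBit n ω v = a ∧ rowBit n η v = b} :=
  ((measurable_rowBit n ω) (measurableSet_singleton a)).inter
    ((measurable_rowBit n η) (measurableSet_singleton b))

lemma rowQ_symm (n : ℕ) (hn : 0 < n) (ω η : Fin n → Bool) (a b : Bool) :
    rowQ n ω η a b = rowQ n ω η (!a) (!b) := by
  unfold rowQ
  conv_lhs => rw [← nuRow_neg n]
  rw [map_measureReal_apply (by fun_prop) (measurableSet_rowQ ..)]
  apply measureReal_congr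
  filter_upwards [nuRow_ne_zero n hn ω, nuRow_ne_zero n hn η] with v h1 h2
  have key : ∀ ω : Fin n → Bool, ∑ j, v j * chi (ω j) ≠ 0 →
      rowBit n ω (-v) = !(rowBit n ω v) := by
    intro ω h
    simp only [rowBit, Pi.neg_apply, neg_mul, sum_neg_distrib]
    rcases lt_or_gt_of_ne h with h | h
    · simp [h, h.le]
    · simp [h, h.le]
  apply propext
  change (rowBit n ω (-v) = a ∧ rowBit n η (-v) = b) ↔
    (rowBit n ω v = !a ∧ rowBit n η v = !b)
  rw [key ω h1, key η h2]
  cases a <;> cases b <;> simp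

lemma rowQ_sum (n : ℕ) (ω η : Fin n → Bool) :
    rowQ n ω η true true + rowQ n ω η false false + flipP n ω η = 1 := by
  unfold rowQ flipP
  rw [← measureReal_union, ← measureReal_union]
  · rw [← probReal_univ (μ := nuRow n)]
    congr 1
    ext v
    cases h1 : rowBit n ω v <;> cases h2 : rowBit n η v <;> simp [h1, h2]
  · rw [Set.disjoint_left]; intro v; simp; grind
  · have h : {v | rowBit n ω v ≠ rowBit n η v} =
      {v | rowBit n ω v = true ∧ rowBit n η v = false} ∪
        {v | rowBit n ω v = false ∧ rowBit n η v = true} := by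
      ext v; simp; grind
    rw [h]
    exact (measurableSet_rowQ ..).union (measurableSet_rowQ ..)
  · rw [Set.disjoint_left]; intro v; simp; grind
  · exact measurableSet_rowQ ..

lemma flipP_eq (n : ℕ) (ω η : Fin n → Bool) :
    flipP n ω η = rowQ n ω η true false + rowQ n ω η false true := by
  unfold rowQ flipP
  rw [← measureReal_union]
  · congr 1
    ext v; simp; grind
  · rw [Set.disjoint_left]; intro v; simp; grind
  · exact measurableSet_rowQ ..

lemma rowQ_eq (n : ℕ) (hn : 0 < n) (ω η : Fin n → Bool) (a b : Bool) :
    rowQ n ω η a b = 1 / 2 * (if a = b then 1 - flipP n ω η else flipP n ω η) := by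
  have h1 := rowQ_sum n ω η
  have h2 := flipP_eq n ω η
  have h3 := rowQ_symm n hn ω η true true
  have h4 := rowQ_symm n hn ω η true false
  simp at h3 h4
  cases a <;> cases b <;> simp <;> linarith

lemma flipP_nonneg (n : ℕ) (ω η : Fin n → Bool) : 0 ≤ flipP n ω η := measureReal_nonneg
lemma flipP_le_one (n : ℕ) (ω η : Fin n → Bool) : flipP n ω η ≤ 1 := measureReal_le_one

/-- Hamming distance. -/
def ham (n : ℕ) (ω η : Fin n → Bool) : ℝ := ∑ j, (if ω j = η j then 0 else 1)

lemma flipP_le (n : ℕ) (hn : 0 < n) (ω η : Fin n → Bool) (s : ℝ) (hs : 0 < s) :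
    flipP n ω η ≤ s + 4 * (ham n ω η / n) / s ^ 2 := by
  have hn' : 0 < √(n : ℝ) := by positivity
  have h1 := nuRow_small n hn ω s hs.le
  have h2 := nuRow_tail n (fun j => chi (ω j) - chi (η j)) (s * √n) (by positivity)
  have h3 : ∑ j, (chi (ω j) - chi (η j)) ^ 2 = 4 * ham n ω η := by
    rw [ham, Finset.mul_sum]
    refine Finset.sum_congr rfl fun j _ => ?_
    cases ω j <;> cases η j <;> norm_num [chi]
  rw [h3, mul_pow, Real.sq_sqrt (by positivity)] at h2
  have h4 : flipP n ω η ≤ (nuRow n).real ({v | |∑ j, v j * chi (ω j)| ≤ s * √n} ∪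
      {v | s * √n ≤ |∑ j, v j * (chi (ω j) - chi (η j))|}) := by
    refine measureReal_mono ?_ (measure_ne_top _ _)
    intro v hv
    simp only [Set.mem_ofPred_eq, Set.mem_union, rowBit, mul_sub, sum_sub_distrib] at hv ⊢
    by_contra! hc
    obtain ⟨c1, c2⟩ := hc
    apply hv
    rw [decide_eq_decide]
    rw [abs_lt] at c2
    rw [lt_abs] at c1
    constructor <;> intro <;> rcases c1 with c1 | c1 <;> linarith
  have h5 := measureReal_union_le (μ := nuRow n) {v | |∑ j, v j * chi (ω j)| ≤ s * √n}
      {v | s * √n ≤ |∑ j, v j * (chi (ω j) - chi (η j))|}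
  have h6 : 4 * ham n ω η / (s ^ 2 * n) = 4 * (ham n ω η / n) / s ^ 2 := by
    have : (0 : ℝ) < n := by positivity
    field_simp
  linarith

/-- One Boolean layer. -/
def layerB (n : ℕ) (θ : Fin n → Fin n → ℝ) (ω : Fin n → Bool) : Fin n → Bool :=
  fun i => rowBit n ω (θ i)

/-- Boolean network. -/
def bnet (n T : ℕ) (Θ : Fin T → Fin n → Fin n → ℝ) (ω : Fin n → Bool) : Fin n → Bool :=
  (List.ofFn Θ).foldl (fun y θ => layerB n θ y) ω

/-- Law of one layer of weights. -/
def matMeas (n : ℕ) : Measure (Fin n → Fin n → ℝ) := Measure.pi fun _ => nuRow n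

instance matMeas_prob (n : ℕ) : IsProbabilityMeasure (matMeas n) := by
  unfold matMeas; infer_instance

lemma weightMeas_eq (n T : ℕ) : weightMeas n T = Measure.pi fun _ => matMeas n := rfl

instance weightMeas_prob (n T : ℕ) : IsProbabilityMeasure (weightMeas n T) := by
  rw [weightMeas_eq]; infer_instance

lemma foldl_chi (n : ℕ) (l : List (Fin n → Fin n → ℝ)) (ω : Fin n → Bool) :
    l.foldl (fun y θ => layerMap n θ y) (fun j => chi (ω j)) =
      fun j => chi (l.foldl (fun y θ => layerB n θ y) ω j) := by
  induction l generalizing ω with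
  | nil => rfl
  | cons θ l ih =>
    simp only [List.foldl_cons]
    rw [← ih]
    congr 1
    ext i
    simp [layerMap, layerB, rowBit, sgn, chi]

lemma boolOut_eq (n T : ℕ) (h : (Fin n → Bool) → Bool) (Θ : Fin T → Fin n → Fin n → ℝ)
    (ω : Fin n → Bool) : boolOut n T h Θ ω = h (bnet n T Θ ω) := by
  unfold boolOut network
  rw [foldl_chi]
  congr 1
  ext i
  change decide (0 < chi (bnet n T Θ ω i)) = _
  cases bnet n T Θ ω i <;> norm_num [chi]

lemma bnet_succ (n T : ℕ) (Θ : Fin (T + 1) → Fin n → Fin n → ℝ) (ω : Fin n → Bool) :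
    bnet n (T + 1) Θ ω = bnet n T (fun j => Θ j.succ) (layerB n (Θ 0) ω) := by
  simp [bnet, List.ofFn_succ]

lemma measurable_layerB (n : ℕ) (ω : Fin n → Bool) :
    Measurable (fun θ : Fin n → Fin n → ℝ => layerB n θ ω) := by
  rw [measurable_pi_iff]
  intro i
  exact (measurable_rowBit n ω).comp (measurable_pi_apply i)

lemma measurable_bnet (n T : ℕ) (ω : Fin n → Bool) :
    Measurable (fun Θ : Fin T → Fin n → Fin n → ℝ => bnet n T Θ ω) := by
  induction T generalizing ω with
  | zero => simp only [bnet, List.ofFn_zero, List.foldl_nil]; exact measurable_const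
  | succ T ih =>
    simp only [bnet_succ]
    have h1 : Measurable (fun z : (Fin T → Fin n → Fin n → ℝ) × (Fin n → Bool) =>
        bnet n T z.1 z.2) := measurable_from_prod_countable_left (fun y => ih y)
    have h2 : Measurable (fun Θ : Fin (T + 1) → Fin n → Fin n → ℝ =>
        ((fun j => Θ j.succ : Fin T → Fin n → Fin n → ℝ), layerB n (Θ 0) ω)) := by
      refine Measurable.prodMk ?_ ((measurable_layerB n ω).comp (measurable_pi_apply 0))
      rw [measurable_pi_iff]
      intro j
      exact measurable_pi_apply j.succ
    exact h1.comp h2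

/-- Annealed disagreement for fixed inputs. -/
def annD (n T : ℕ) (h : (Fin n → Bool) → Bool) (ω η : Fin n → Bool) : ℝ :=
  ∫ Θ, (if h (bnet n T Θ ω) = h (bnet n T Θ η) then (0 : ℝ) else 1) ∂weightMeas n T

lemma measurable_dis (n T : ℕ) (h : (Fin n → Bool) → Bool) (ω η : Fin n → Bool) :
    Measurable (fun Θ : Fin T → Fin n → Fin n → ℝ =>
      (if h (bnet n T Θ ω) = h (bnet n T Θ η) then (0 : ℝ) else 1)) := by
  have h1 : Measurable (fun z : (Fin n → Bool) × (Fin n → Bool) =>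
      (if h z.1 = h z.2 then (0 : ℝ) else 1)) := measurable_of_finite _
  exact h1.comp ((measurable_bnet n T ω).prodMk (measurable_bnet n T η))

lemma integrable_dis (n T : ℕ) (h : (Fin n → Bool) → Bool) (ω η : Fin n → Bool) :
    Integrable (fun Θ : Fin T → Fin n → Fin n → ℝ =>
      (if h (bnet n T Θ ω) = h (bnet n T Θ η) then (0 : ℝ) else 1)) (weightMeas n T) := by
  refine Integrable.of_bound (measurable_dis n T h ω η).aestronglyMeasurable 1 (ae_of_all _ ?_)
  intro Θ
  split_ifs <;> simp

lemma annD_nonneg (n T : ℕ) (h : (Fin n → Bool) → Bool) (ω η : Fin n → Bool) :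
    0 ≤ annD n T h ω η := by
  refine integral_nonneg fun Θ => ?_
  split_ifs <;> simp

lemma annD_le_one (n T : ℕ) (h : (Fin n → Bool) → Bool) (ω η : Fin n → Bool) :
    annD n T h ω η ≤ 1 := by
  have : annD n T h ω η ≤ ∫ Θ, (1 : ℝ) ∂weightMeas n T := by
    refine integral_mono (integrable_dis n T h ω η) (integrable_const _) fun Θ => ?_
    dsimp only
    split_ifs <;> simp
  simpa using this

lemma annD_self (n T : ℕ) (h : (Fin n → Bool) → Bool) (ω : Fin n → Bool) :
    annD n T h ω ω = 0 := by
  simp [annD]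

lemma integral_layer (n : ℕ) (ω η : Fin n → Bool) (F : (Fin n → Bool) → (Fin n → Bool) → ℝ) :
    ∫ θ, F (layerB n θ ω) (layerB n θ η) ∂matMeas n = pairMean n (flipP n ω η) F := by
  let S : (Fin n → Bool) → (Fin n → Bool) → Set (Fin n → Fin n → ℝ) := fun a b =>
    Set.pi Set.univ fun i => {v | rowBit n ω v = a i ∧ rowBit n η v = b i}
  have hS : ∀ a b, MeasurableSet (S a b) := fun a b =>
    MeasurableSet.univ_pi fun i => measurableSet_rowQ ..
  have hmem : ∀ a b θ, θ ∈ S a b ↔ (layerB n θ ω = a ∧ layerB n θ η = b) := by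
    intro a b θ
    simp only [S, Set.mem_univ_pi, Set.mem_ofPred_eq, funext_iff, layerB]
    exact forall_and
  have h1 : ∀ θ, F (layerB n θ ω) (layerB n θ η) =
      ∑ a, ∑ b, (S a b).indicator (fun _ => F a b) θ := by
    intro θ
    rw [Finset.sum_eq_single (layerB n θ ω), Finset.sum_eq_single (layerB n θ η)]
    · rw [Set.indicator_of_mem]; rw [hmem]; exact ⟨rfl, rfl⟩
    · intro b _ hb
      rw [Set.indicator_of_notMem]; rw [hmem]; exact fun h => hb h.2.symm
    · simp
    · intro a _ ha
      refine Finset.sum_eq_zero fun b _ => ?_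
      rw [Set.indicator_of_notMem]; rw [hmem]; exact fun h => ha h.1.symm
    · simp
  have hi : ∀ a b, Integrable ((S a b).indicator (fun _ => F a b)) (matMeas n) := fun a b =>
    (integrable_const _).indicator (hS a b)
  simp_rw [h1]
  rw [integral_finsetSum _ (fun a _ => integrable_finsetSum _ fun b _ => hi a b)]
  unfold pairMean
  refine Finset.sum_congr rfl fun a _ => ?_
  rw [integral_finsetSum _ (fun b _ => hi a b)]
  refine Finset.sum_congr rfl fun b _ => ?_
  rw [integral_indicator_const _ (hS a b), smul_eq_mul]
  congr 1
  have h2 : (matMeas n).real (S a b) = ∏ i, rowQ n ω η (a i) (b i) := by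
    rw [measureReal_def, matMeas, Measure.pi_pi, ENNReal.toReal_prod]
    rfl
  rw [h2, pairWeight]
  have h3 : ∀ i : Fin n, rowQ n ω η (a i) (b i) =
      1 / 2 * (if a i = b i then 1 - flipP n ω η else flipP n ω η) := fun i =>
    rowQ_eq n (Fin.pos i) ω η _ _
  simp_rw [h3, Finset.prod_mul_distrib]
  simp

lemma annD_succ (n T : ℕ) (h : (Fin n → Bool) → Bool) (ω η : Fin n → Bool) :
    annD n (T + 1) h ω η = pairMean n (flipP n ω η) (annD n T h) := by
  rw [← integral_layer]
  unfold annD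
  let g : (Fin n → Fin n → ℝ) × (Fin T → Fin n → Fin n → ℝ) → ℝ := fun z =>
    if h (bnet n T z.2 (layerB n z.1 ω)) = h (bnet n T z.2 (layerB n z.1 η)) then (0 : ℝ) else 1
  have hmp := measurePreserving_piFinSuccAbove (fun _ : Fin (T + 1) => matMeas n) 0
  have h1 := hmp.integral_comp' g
  have h2 : ∀ Θ : Fin (T + 1) → Fin n → Fin n → ℝ,
      g (MeasurableEquiv.piFinSuccAbove (fun _ => Fin n → Fin n → ℝ) 0 Θ) =
      (if h (bnet n (T + 1) Θ ω) = h (bnet n (T + 1) Θ η) then (0 : ℝ) else 1) := by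
    intro Θ
    rw [bnet_succ, bnet_succ]
    rfl
  have hg : Measurable g := by
    have m1 : Measurable (fun z : (Fin T → Fin n → Fin n → ℝ) × (Fin n → Bool) =>
        bnet n T z.1 z.2) := measurable_from_prod_countable_left (fun y => measurable_bnet n T y)
    have m2 : ∀ ω : Fin n → Bool, Measurable
        (fun z : (Fin n → Fin n → ℝ) × (Fin T → Fin n → Fin n → ℝ) =>
          bnet n T z.2 (layerB n z.1 ω)) := fun ω =>
      m1.comp (measurable_snd.prodMk ((measurable_layerB n ω).comp measurable_fst))
    have m3 : Measurable (fun z : (Fin n → Bool) × (Fin n → Bool) =>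
      (if h z.1 = h z.2 then (0 : ℝ) else 1)) := measurable_of_finite _
    exact m3.comp ((m2 ω).prodMk (m2 η))
  have hgi : Integrable g ((matMeas n).prod (weightMeas n T)) := by
    refine Integrable.of_bound hg.aestronglyMeasurable 1 (ae_of_all _ ?_)
    intro z
    simp only [g]
    split_ifs <;> simp
  simp_rw [h2] at h1
  rw [weightMeas_eq n (T + 1), h1]
  exact integral_prod g hgi

lemma pairWeight_nonneg (n : ℕ) (ε : ℝ) (h0 : 0 ≤ ε) (h1 : ε ≤ 1) (ω η : Fin n → Bool) :
    0 ≤ pairWeight n ε ω η := by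
  unfold pairWeight
  refine mul_nonneg (by positivity) (Finset.prod_nonneg fun i _ => ?_)
  split_ifs <;> linarith

lemma pairMean_mono (n : ℕ) (ε : ℝ) (h0 : 0 ≤ ε) (h1 : ε ≤ 1)
    (F G : (Fin n → Bool) → (Fin n → Bool) → ℝ) (h : ∀ ω η, F ω η ≤ G ω η) :
    pairMean n ε F ≤ pairMean n ε G := by
  unfold pairMean
  refine Finset.sum_le_sum fun ω _ => Finset.sum_le_sum fun η _ => ?_
  exact mul_le_mul_of_nonneg_left (h ω η) (pairWeight_nonneg n ε h0 h1 ω η)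

lemma pairMean_prod (n : ℕ) (ε : ℝ) (f : Fin n → Bool → Bool → ℝ) :
    pairMean n ε (fun ω η => ∏ i, f i (ω i) (η i)) =
      ∏ i, ((1 / 2) * ∑ a, ∑ b, (if a = b then 1 - ε else ε) * f i a b) := by
  unfold pairMean pairWeight
  rw [Finset.prod_mul_distrib, Finset.prod_univ_sum, Fintype.piFinset_univ, Finset.mul_sum]
  refine Finset.sum_congr rfl fun ω _ => ?_
  rw [Finset.prod_univ_sum, Fintype.piFinset_univ, Finset.mul_sum]
  refine Finset.sum_congr rfl fun η _ => ?_
  rw [Finset.prod_mul_distrib]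
  simp [mul_assoc]

lemma pairMean_one (n : ℕ) (ε : ℝ) : pairMean n ε (fun _ _ => 1) = 1 := by
  have := pairMean_prod n ε (fun _ _ _ => 1)
  simp only [Finset.prod_const_one] at this
  rw [this]
  refine Finset.prod_eq_one fun i _ => ?_
  simp
  norm_num

lemma pairMean_add (n : ℕ) (ε : ℝ) (F G : (Fin n → Bool) → (Fin n → Bool) → ℝ) :
    pairMean n ε (fun ω η => F ω η + G ω η) = pairMean n ε F + pairMean n ε G := by
  simp [pairMean, mul_add, Finset.sum_add_distrib]

lemma pairMean_smul (n : ℕ) (ε c : ℝ) (F : (Fin n → Bool) → (Fin n → Bool) → ℝ) :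
    pairMean n ε (fun ω η => c * F ω η) = c * pairMean n ε F := by
  simp [pairMean, Finset.mul_sum, mul_left_comm]

lemma pairMean_const (n : ℕ) (ε c : ℝ) : pairMean n ε (fun _ _ => c) = c := by
  have := pairMean_smul n ε c (fun _ _ => 1)
  simpa [pairMean_one] using this

lemma pairMean_bit (n : ℕ) (ε : ℝ) (i : Fin n) :
    pairMean n ε (fun ω η => if ω i = η i then 0 else 1) = ε := by
  have := pairMean_prod n ε (fun j a b => if j = i then (if a = b then 0 else 1) else 1)
  have e : ∀ ω η : Fin n → Bool,
      (∏ j, if j = i then (if ω j = η j then (0 : ℝ) else 1) else 1) =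
      if ω i = η i then 0 else 1 := by
    intro ω η
    rw [Finset.prod_ite_eq' Finset.univ i]
    simp
  simp only [e] at this
  rw [this, Finset.prod_eq_single i]
  · simp; ring
  · intro j _ hj
    simp [hj]
    norm_num
  · simp

lemma pairMean_ham (n : ℕ) (ε : ℝ) : pairMean n ε (ham n) = n * ε := by
  have : pairMean n ε (ham n) =
      ∑ i : Fin n, pairMean n ε (fun ω η => if ω i = η i then 0 else 1) := by
    unfold pairMean ham
    simp_rw [Finset.mul_sum]
    conv_rhs => rw [Finset.sum_comm]
    refine Finset.sum_congr rfl fun ω _ => ?_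
    rw [Finset.sum_comm]
  rw [this]
  simp [pairMean_bit]

lemma pairMean_zero (n : ℕ) (F : (Fin n → Bool) → (Fin n → Bool) → ℝ)
    (hF : ∀ ω, F ω ω = 0) : pairMean n 0 F = 0 := by
  unfold pairMean
  refine Finset.sum_eq_zero fun ω _ => Finset.sum_eq_zero fun η _ => ?_
  by_cases h : ω = η
  · subst h; simp [hF]
  · obtain ⟨i, hi⟩ := Function.ne_iff.1 h
    have : pairWeight n 0 ω η = 0 := by
      unfold pairWeight
      rw [Finset.prod_eq_zero (Finset.mem_univ i) (by simp [hi]), mul_zero]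
    rw [this, zero_mul]

lemma integral_disagree (n T : ℕ) (ε : ℝ) (h : (Fin n → Bool) → Bool) :
    ∫ Θ, disagreeProb n ε (boolOut n T h Θ) ∂weightMeas n T = pairMean n ε (annD n T h) := by
  unfold disagreeProb pairMean annD
  simp_rw [boolOut_eq]
  have hi : ∀ ω η, Integrable (fun Θ => pairWeight n ε ω η *
      (if h (bnet n T Θ ω) = h (bnet n T Θ η) then (0 : ℝ) else 1)) (weightMeas n T) :=
    fun ω η => (integrable_dis n T h ω η).const_mul _
  rw [integral_finsetSum _ (fun a _ => integrable_finsetSum _ fun b _ => hi a b)]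
  refine Finset.sum_congr rfl fun a _ => ?_
  rw [integral_finsetSum _ (fun b _ => hi a b)]
  refine Finset.sum_congr rfl fun b _ => ?_
  rw [integral_const_mul]

lemma measurable_disagree (n T : ℕ) (ε : ℝ) (h : (Fin n → Bool) → Bool) :
    Measurable fun Θ => disagreeProb n ε (boolOut n T h Θ) := by
  unfold disagreeProb pairMean
  simp_rw [boolOut_eq]
  refine Finset.measurable_sum _ fun a _ => Finset.measurable_sum _ fun b _ => ?_
  exact (measurable_dis n T h a b).const_mul _

lemma integrable_disagree (n T : ℕ) (ε : ℝ) (h : (Fin n → Bool) → Bool) :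
    Integrable (fun Θ => disagreeProb n ε (boolOut n T h Θ)) (weightMeas n T) := by
  unfold disagreeProb pairMean
  simp_rw [boolOut_eq]
  refine integrable_finsetSum _ fun a _ => integrable_finsetSum _ fun b _ => ?_
  exact (integrable_dis n T h a b).const_mul _

lemma disagree_nonneg (n : ℕ) (ε : ℝ) (h0 : 0 ≤ ε) (h1 : ε ≤ 1) (f : (Fin n → Bool) → Bool) :
    0 ≤ disagreeProb n ε f := by
  have := pairMean_mono n ε h0 h1 (fun _ _ => 0) (fun ω η => if f ω = f η then 0 else 1)
    (fun ω η => by split_ifs <;> simp)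
  rw [pairMean_const] at this
  exact this

lemma annealed_fixed (h : (n : ℕ) → (Fin n → Bool) → Bool)
    (hstable : ∀ δ : ℝ, 0 < δ → ∃ ε₀ : ℝ, 0 < ε₀ ∧ ∀ ε : ℝ, 0 < ε → ε ≤ ε₀ → ∀ n : ℕ,
        disagreeProb n ε (h n) < δ) (T : ℕ) :
    ∀ δ : ℝ, 0 < δ → ∃ ε₀ : ℝ, 0 < ε₀ ∧ ∀ ε : ℝ, 0 < ε → ε ≤ ε₀ → ∀ n : ℕ,
      pairMean n ε (annD n T (h n)) < δ := by
  induction T with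
  | zero =>
    intro δ hδ
    obtain ⟨ε₀, h0, h1⟩ := hstable δ hδ
    refine ⟨ε₀, h0, fun ε he he' n => ?_⟩
    have := h1 ε he he' n
    have e : annD n 0 (h n) = fun ω η => if h n ω = h n η then (0 : ℝ) else 1 := by
      ext ω η
      simp [annD, bnet]
    rw [e]
    exact this
  | succ T ih =>
    intro δ hδ
    obtain ⟨ε₁, h0, h1⟩ := ih (δ / 4) (by linarith)
    set s : ℝ := ε₁ * δ / 4 with hs
    have hs0 : 0 < s := by positivity
    refine ⟨min 1 (s ^ 3 / 4), by positivity, fun ε he he' n => ?_⟩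
    have hε1 : ε ≤ 1 := he'.trans (min_le_left _ _)
    have hε2 : ε ≤ s ^ 3 / 4 := he'.trans (min_le_right _ _)
    rcases Nat.eq_zero_or_pos n with rfl | hn
    · have : annD 0 (T + 1) (h 0) = fun _ _ => 0 := by
        ext ω η
        rw [Subsingleton.elim ω η, annD_self]
      rw [this, pairMean_const]
      exact hδ
    have hn' : (0 : ℝ) < n := by positivity
    have key : ∀ p : ℝ, 0 ≤ p → p ≤ 1 → pairMean n p (annD n T (h n)) ≤ δ / 4 + p / ε₁ := by
      intro p hp0 hp1
      rcases hp0.eq_or_lt with rfl | hp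
      · rw [pairMean_zero _ _ (annD_self n T (h n))]
        positivity
      by_cases hp2 : p ≤ ε₁
      · have := h1 p hp hp2 n
        have : 0 ≤ p / ε₁ := by positivity
        linarith
      · have a1 := pairMean_mono n p hp0 hp1 _ _ (annD_le_one n T (h n))
        rw [pairMean_const] at a1
        have : 1 ≤ p / ε₁ := by
          rw [le_div_iff₀ h0]; linarith
        linarith
    have bd : ∀ ω η, annD n (T + 1) (h n) ω η ≤
        (δ / 4 + s / ε₁) + (4 / (n * s ^ 2 * ε₁)) * ham n ω η := by
      intro ω η
      rw [annD_succ]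
      refine (key _ (flipP_nonneg n ω η) (flipP_le_one n ω η)).trans ?_
      have f1 := flipP_le n hn ω η s hs0
      have f2 : flipP n ω η / ε₁ ≤ (s + 4 * (ham n ω η / n) / s ^ 2) / ε₁ := by gcongr
      have f3 : (s + 4 * (ham n ω η / n) / s ^ 2) / ε₁ =
        s / ε₁ + (4 / (n * s ^ 2 * ε₁)) * ham n ω η := by field_simp
      linarith
    have fin := pairMean_mono n ε he.le hε1 _ _ bd
    rw [pairMean_add, pairMean_const, pairMean_smul, pairMean_ham] at fin
    have g1 : 4 / (n * s ^ 2 * ε₁) * (n * ε) = (4 * ε) / (s ^ 2 * ε₁) := by field_simp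
    have g2 : (4 * ε) / (s ^ 2 * ε₁) ≤ s ^ 3 / (s ^ 2 * ε₁) := by
      gcongr; linarith
    have g3 : s ^ 3 / (s ^ 2 * ε₁) = s / ε₁ := by field_simp
    have g4 : s / ε₁ = δ / 4 := by rw [hs]; field_simp
    linarith

lemma annealed_bdd (h : (n : ℕ) → (Fin n → Bool) → Bool)
    (hstable : ∀ δ : ℝ, 0 < δ → ∃ ε₀ : ℝ, 0 < ε₀ ∧ ∀ ε : ℝ, 0 < ε → ε ≤ ε₀ → ∀ n : ℕ,
        disagreeProb n ε (h n) < δ) (C : ℕ) (δ : ℝ) (hδ : 0 < δ) :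
    ∃ ε₀ : ℝ, 0 < ε₀ ∧ ∀ T ≤ C, ∀ ε : ℝ, 0 < ε → ε ≤ ε₀ → ∀ n : ℕ,
      pairMean n ε (annD n T (h n)) < δ := by
  induction C with
  | zero =>
    obtain ⟨e, he, h1⟩ := annealed_fixed h hstable 0 δ hδ
    refine ⟨e, he, fun T hT => ?_⟩
    obtain rfl : T = 0 := by omega
    exact h1
  | succ C ih =>
    obtain ⟨e, he, h1⟩ := annealed_fixed h hstable (C + 1) δ hδ
    obtain ⟨e', he', h1'⟩ := ih
    refine ⟨min e e', by positivity, fun T hT ε h0 hε n => ?_⟩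
    rcases Nat.lt_or_ge C T with hc | hc
    · obtain rfl : T = C + 1 := by omega
      exact h1 ε h0 (hε.trans (min_le_left _ _)) n
    · exact h1' T hc ε h0 (hε.trans (min_le_right _ _)) n

/-- for the fully connected sign network with i.i.d. standard normal weights,
if the deterministic sequence `{h_n}` is noise stable and the depths `T_n` are bounded, then
the random network outputs are annealed (and hence quenched) noise stable. -/
theorem noise_stable_of_bounded_depth
    (T : ℕ → ℕ) (hT : ∃ C : ℕ, ∀ n, T n ≤ C)
    (h : (n : ℕ) → (Fin n → Bool) → Bool)
    (hstable : ∀ δ : ℝ, 0 < δ → ∃ ε₀ : ℝ, 0 < ε₀ ∧ ∀ ε : ℝ, 0 < ε → ε ≤ ε₀ → ∀ n : ℕ,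
        disagreeProb n ε (h n) < δ) :
    -- annealed noise stable
    ((∀ δ : ℝ, 0 < δ → ∃ ε₀ : ℝ, 0 < ε₀ ∧ ∀ ε : ℝ, 0 < ε → ε ≤ ε₀ → ∀ n : ℕ,
        (∫ Θ, disagreeProb n ε (boolOut n (T n) (h n) Θ) ∂weightMeas n (T n)) < δ)
      ∧
      -- quenched noise stable
      (∀ δ : ℝ, 0 < δ → ∃ ε : ℝ, 0 < ε ∧ ∀ n : ℕ,
        ENNReal.ofReal (1 - δ) ≤
          weightMeas n (T n) {Θ | disagreeProb n ε (boolOut n (T n) (h n) Θ) < δ})) := by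
  obtain ⟨C, hC⟩ := hT
  have ann : ∀ δ : ℝ, 0 < δ → ∃ ε₀ : ℝ, 0 < ε₀ ∧ ∀ ε : ℝ, 0 < ε → ε ≤ ε₀ → ∀ n : ℕ,
        (∫ Θ, disagreeProb n ε (boolOut n (T n) (h n) Θ) ∂weightMeas n (T n)) < δ := by
    intro δ hδ
    obtain ⟨ε₀, h0, h1⟩ := annealed_bdd h hstable C δ hδ
    refine ⟨ε₀, h0, fun ε he he' n => ?_⟩
    rw [integral_disagree]
    exact h1 (T n) (hC n) ε he he' n
  refine ⟨ann, fun δ hδ => ?_⟩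
  obtain ⟨ε₀, h0, h1⟩ := ann (δ * δ) (by positivity)
  have hε : 0 < min ε₀ 1 := by positivity
  refine ⟨min ε₀ 1, hε, fun n => ?_⟩
  have h2 := h1 (min ε₀ 1) hε (min_le_left _ _) n
  set g := fun Θ => disagreeProb n (min ε₀ 1) (boolOut n (T n) (h n) Θ) with hg
  have h3 := mul_meas_ge_le_integral_of_nonneg (μ := weightMeas n (T n)) (f := g)
    (ae_of_all _ fun Θ => disagree_nonneg n _ hε.le (min_le_right _ _) _)
    (integrable_disagree n (T n) _ (h n)) δ
  have h4 : (weightMeas n (T n)).real {Θ | δ ≤ g Θ} ≤ δ := by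
    have : δ * (weightMeas n (T n)).real {Θ | δ ≤ g Θ} ≤ δ * δ := h3.trans h2.le
    exact le_of_mul_le_mul_left this hδ
  have hm : MeasurableSet {Θ | δ ≤ g Θ} :=
    measurableSet_le measurable_const (measurable_disagree n (T n) _ (h n))
  have h5 : {Θ | g Θ < δ} = {Θ | δ ≤ g Θ}ᶜ := by
    ext Θ; simp
  change ENNReal.ofReal (1 - δ) ≤ weightMeas n (T n) {Θ | g Θ < δ}
  rw [ENNReal.ofReal_le_iff_le_toReal (measure_ne_top _ _), ← measureReal_def, h5,
    probReal_compl_eq_one_sub hm]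
  linarith

end
end

section
/- Let v ∈ [0,1], let w = (a,b) ∈ ℝ² with r = ‖w‖₂, and let X ~ N(a,1) and Y ~ N(b,1) be independent. Define g_w(v) = P(|Y| ≤ √(v/(1−v))·|X|) and g(v) = (2/π)·arctan(√(v/(1−v))). Then g_w(v) ≥ g(v)·e^{−r²/2}. -/
open MeasureTheory ProbabilityTheory Real

noncomputable section

/-- `g_w(v)`: the probability that a 2-dimensional Gaussian with mean `w = (a,b)` and identity
covariance lies in the double cone `A_v = {(x,y) : |y| ≤ √(v/(1-v))·|x|}`. -/
def gCone (a b v : ℝ) : ℝ :=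
  (((gaussianReal a 1).prod (gaussianReal b 1))
      {p : ℝ × ℝ | |p.2| ≤ √(v / (1 - v)) * |p.1|}).toReal

def FF (a b : ℝ) (p : ℝ × ℝ) : ℝ := (2 * π)⁻¹ * exp (-((p.1 - a) ^ 2 + (p.2 - b) ^ 2) / 2)

lemma FF_nonneg (a b : ℝ) (p : ℝ × ℝ) : 0 ≤ FF a b p := by
  unfold FF; positivity

lemma FF_meas (a b : ℝ) : Measurable (fun p => ENNReal.ofReal (FF a b p)) := by
  unfold FF; fun_prop

lemma prod_eq (a b : ℝ) (A : Set (ℝ × ℝ)) (hA : MeasurableSet A) :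
    ((gaussianReal a 1).prod (gaussianReal b 1)) A = ∫⁻ p in A, ENNReal.ofReal (FF a b p) := by
  rw [gaussianReal_of_var_ne_zero _ one_ne_zero, gaussianReal_of_var_ne_zero _ one_ne_zero,
    prod_withDensity (by fun_prop) (by fun_prop), withDensity_apply _ hA,
    ← Measure.volume_eq_prod]
  refine lintegral_congr fun p => ?_
  rw [gaussianPDF, gaussianPDF, ← ENNReal.ofReal_mul (gaussianPDFReal_nonneg _ _ _)]
  congr 1
  simp only [gaussianPDFReal_def, FF, NNReal.coe_one, mul_one]
  have h : (2 * π)⁻¹ = (√(2 * π))⁻¹ * (√(2 * π))⁻¹ := by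
    rw [← mul_inv, Real.mul_self_sqrt (by positivity)]
  rw [h, mul_mul_mul_comm, ← exp_add]
  congr 2
  ring

lemma prod_neg (a b : ℝ) (A : Set (ℝ × ℝ)) (hA : MeasurableSet A) (hs : ∀ p, -p ∈ A ↔ p ∈ A) :
    ((gaussianReal (-a) 1).prod (gaussianReal (-b) 1)) A
      = ((gaussianReal a 1).prod (gaussianReal b 1)) A := by
  rw [← gaussianReal_map_neg, ← gaussianReal_map_neg,
    Measure.map_prod_map _ _ (by fun_prop) (by fun_prop), Measure.map_apply (by fun_prop) hA]
  congr 1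
  ext p
  exact hs p

lemma FF_ineq (a b : ℝ) (p : ℝ × ℝ) :
    2 * exp (-(a ^ 2 + b ^ 2) / 2) * FF 0 0 p ≤ FF a b p + FF (-a) (-b) p := by
  obtain ⟨x, y⟩ := p
  have h1 : FF a b (x, y) = exp (-(a ^ 2 + b ^ 2) / 2) * FF 0 0 (x, y) * exp (a * x + b * y) := by
    simp only [FF]
    rw [show ∀ A B C D : ℝ, A * (B * C) * D = B * (A * C * D) by intros; ring, ← exp_add,
      ← exp_add]
    congr 2; ring
  have h2 : FF (-a) (-b) (x, y)
      = exp (-(a ^ 2 + b ^ 2) / 2) * FF 0 0 (x, y) * exp (-(a * x + b * y)) := by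
    simp only [FF]
    rw [show ∀ A B C D : ℝ, A * (B * C) * D = B * (A * C * D) by intros; ring, ← exp_add,
      ← exp_add]
    congr 2; ring
  rw [h1, h2]
  have h3 := one_le_cosh (a * x + b * y)
  rw [cosh_eq] at h3
  have h4 : 0 ≤ exp (-(a ^ 2 + b ^ 2) / 2) * FF 0 0 (x, y) :=
    mul_nonneg (exp_pos _).le (FF_nonneg _ _ _)
  nlinarith

lemma radial : ∫⁻ r in Set.Ioi (0:ℝ), ENNReal.ofReal (r * ((2 * π)⁻¹ * exp (-r ^ 2 / 2)))
    = ENNReal.ofReal (2 * π)⁻¹ := by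
  have hI : Integrable (fun x : ℝ => x * ((2 * π)⁻¹ * exp (-x ^ 2 / 2))) := by
    have := (integrable_mul_exp_neg_mul_sq (b := 1/2) (by norm_num)).const_mul ((2 * π)⁻¹)
    refine this.congr (Filter.Eventually.of_forall fun x => ?_)
    have : -(1/2:ℝ) * x ^ 2 = -x ^ 2 / 2 := by ring
    simp only [this]; ring
  rw [← ofReal_integral_eq_lintegral_ofReal hI.integrableOn]
  · congr 1
    have h := integral_rpow_mul_exp_neg_mul_rpow (p := 2) (q := 1) (b := 1/2) (by norm_num)
      (by norm_num) (by norm_num)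
    have e : ∀ x : ℝ, x * ((2 * π)⁻¹ * exp (-x ^ 2 / 2))
        = (2 * π)⁻¹ * (x ^ (1:ℝ) * exp (-(1/2) * x ^ (2:ℝ))) := by
      intro x
      have : -(1/2:ℝ) * x ^ 2 = -x ^ 2 / 2 := by ring
      rw [rpow_one, rpow_two, this]; ring
    simp_rw [e]
    rw [integral_const_mul, h]
    norm_num [rpow_neg_one]
  · filter_upwards [ae_restrict_mem measurableSet_Ioi] with x hx
    have : (0:ℝ) < x := hx
    simp only [Pi.zero_apply]
    positivity

def SS (t : ℝ) : Set ℝ := Set.Ioo (-arctan t) (arctan t) ∪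
  (Set.Ioo (π - arctan t) π ∪ Set.Ioo (-π) (-π + arctan t))

lemma base_ineq {t θ : ℝ} (h1 : -arctan t < θ) (h2 : θ < arctan t) :
    |sin θ| ≤ t * |cos θ| := by
  have h3 := arctan_lt_pi_div_two t
  have hc : 0 < cos θ := cos_pos_of_mem_Ioo ⟨by linarith, by linarith⟩
  have e : sin θ = tan θ * cos θ := by rw [tan_mul_cos hc.ne']
  rw [abs_of_pos hc, e, abs_mul, abs_of_pos hc]
  refine mul_le_mul_of_nonneg_right ?_ hc.le
  rw [abs_le]
  constructor
  · rw [← arctan_le_arctan_iff, arctan_neg, arctan_tan (by linarith) (by linarith)]; exact h1.le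
  · rw [← arctan_le_arctan_iff, arctan_tan (by linarith) (by linarith)]; exact h2.le

lemma SS_ineq {t θ : ℝ} (h : θ ∈ SS t) : |sin θ| ≤ t * |cos θ| := by
  rcases h with ⟨h1, h2⟩ | ⟨h1, h2⟩ | ⟨h1, h2⟩
  · exact base_ineq h1 h2
  · have := base_ineq (t := t) (θ := θ - π) (by linarith) (by linarith)
    simpa [sin_sub_pi, cos_sub_pi] using this
  · have := base_ineq (t := t) (θ := θ + π) (by linarith) (by linarith)
    simpa [sin_add_pi, cos_add_pi] using this

lemma SS_sub {t : ℝ} (ht : 0 ≤ t) : SS t ⊆ Set.Ioo (-π) π := by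
  have h3 := arctan_lt_pi_div_two t
  have h4 := pi_pos
  have h5 := arctan_nonneg.2 ht
  rintro θ (⟨h1, h2⟩ | ⟨h1, h2⟩ | ⟨h1, h2⟩) <;> constructor <;> linarith

lemma SS_meas (t : ℝ) : MeasurableSet (SS t) :=
  measurableSet_Ioo.union (measurableSet_Ioo.union measurableSet_Ioo)

lemma SS_vol {t : ℝ} (ht : 0 ≤ t) : volume (SS t) = ENNReal.ofReal (4 * arctan t) := by
  have h3 := arctan_lt_pi_div_two t
  have h4 := pi_pos
  have h5 := arctan_nonneg.2 ht
  unfold SS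
  rw [measure_union _ (measurableSet_Ioo.union measurableSet_Ioo),
    measure_union _ measurableSet_Ioo, Real.volume_Ioo, Real.volume_Ioo, Real.volume_Ioo,
    ← ENNReal.ofReal_add, ← ENNReal.ofReal_add]
  · congr 1; ring
  any_goals linarith
  · rw [Set.disjoint_left]; rintro x ⟨a, b⟩ ⟨c, d⟩; linarith
  · rw [Set.disjoint_left]; rintro x ⟨a, b⟩ (⟨c, d⟩ | ⟨c, d⟩) <;> linarith

lemma cone_meas (t : ℝ) : MeasurableSet {p : ℝ × ℝ | |p.2| ≤ t * |p.1|} :=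
  (isClosed_le (by fun_prop) (by fun_prop)).measurableSet

lemma centered {t : ℝ} (ht : 0 ≤ t) : ENNReal.ofReal (2 / π * arctan t) ≤
    ∫⁻ p in {p : ℝ × ℝ | |p.2| ≤ t * |p.1|}, ENNReal.ofReal (FF 0 0 p) := by
  rw [← lintegral_indicator (cone_meas t), ← lintegral_comp_polarCoord_symm]
  have hsub : Set.Ioi (0:ℝ) ×ˢ SS t ⊆ polarCoord.target :=
    Set.prod_mono le_rfl (SS_sub ht)
  refine le_trans ?_ (lintegral_mono_set hsub)
  have e : ∫⁻ p in Set.Ioi (0:ℝ) ×ˢ SS t,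
      ENNReal.ofReal (p.1 * ((2 * π)⁻¹ * exp (-p.1 ^ 2 / 2))) = ENNReal.ofReal (2 / π * arctan t) := by
    rw [Measure.volume_eq_prod, ← Measure.prod_restrict]
    have := lintegral_prod_mul (μ := volume.restrict (Set.Ioi (0:ℝ))) (ν := volume.restrict (SS t))
      (f := fun r => ENNReal.ofReal (r * ((2 * π)⁻¹ * exp (-r ^ 2 / 2)))) (g := fun _ => 1)
      (by fun_prop) (by fun_prop)
    simp only [mul_one] at this
    rw [this, radial, lintegral_one, Measure.restrict_apply_univ, SS_vol ht,
      ← ENNReal.ofReal_mul (by positivity)]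
    congr 1
    field_simp
    ring
  rw [← e]
  refine setLIntegral_mono' (measurableSet_Ioi.prod (SS_meas t)) ?_
  rintro ⟨r, θ⟩ ⟨hr, hθ⟩
  have hr : 0 < r := hr
  have hm : polarCoord.symm (r, θ) ∈ {p : ℝ × ℝ | |p.2| ≤ t * |p.1|} := by
    simp only [polarCoord_symm_apply, Set.mem_ofPred_eq, abs_mul, abs_of_pos hr]
    have := mul_le_mul_of_nonneg_left (SS_ineq hθ) hr.le
    linarith
  rw [Set.indicator_of_mem hm, smul_eq_mul, ← ENNReal.ofReal_mul hr.le]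
  apply le_of_eq
  simp only [polarCoord_symm_apply, FF, sub_zero]
  congr 4
  have := sin_sq_add_cos_sq θ
  linear_combination (r ^ 2 / 2) * this

/-- `g_w(v) ≥ g(v)·e^{-r²/2}` where `g(v) = (2/π) arctan √(v/(1-v))` and
`r = ‖w‖₂`. -/
theorem gCone_ge_arctan_mul_exp (v : ℝ) (hv : v ∈ Set.Icc (0 : ℝ) 1) (a b : ℝ) :
    2 / π * arctan (√(v / (1 - v))) * exp (-(a ^ 2 + b ^ 2) / 2) ≤ gCone a b v := by
  unfold gCone
  have ht : 0 ≤ √(v / (1 - v)) := Real.sqrt_nonneg _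
  generalize √(v / (1 - v)) = t at ht
  have hA := cone_meas t
  have hc := centered ht
  have hs := prod_neg a b _ hA (by intro p; simp)
  have hp1 := prod_eq a b _ hA
  have hp2 := prod_eq (-a) (-b) _ hA
  set A := {p : ℝ × ℝ | |p.2| ≤ t * |p.1|}
  set c := exp (-(a ^ 2 + b ^ 2) / 2) with hcdef
  have hcpos : 0 < c := exp_pos _
  have key : ENNReal.ofReal (2 * c) * ENNReal.ofReal (2 / π * arctan t) ≤
      ((gaussianReal a 1).prod (gaussianReal b 1)) A
        + ((gaussianReal a 1).prod (gaussianReal b 1)) A := by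
    calc _ ≤ ENNReal.ofReal (2 * c) * ∫⁻ p in A, ENNReal.ofReal (FF 0 0 p) := by gcongr
      _ = ∫⁻ p in A, ENNReal.ofReal (2 * c) * ENNReal.ofReal (FF 0 0 p) :=
        (lintegral_const_mul _ (FF_meas 0 0)).symm
      _ ≤ ∫⁻ p in A, (ENNReal.ofReal (FF a b p) + ENNReal.ofReal (FF (-a) (-b) p)) := by
        refine lintegral_mono fun p => ?_
        rw [← ENNReal.ofReal_mul (by positivity),
          ← ENNReal.ofReal_add (FF_nonneg _ _ _) (FF_nonneg _ _ _)]
        exact ENNReal.ofReal_le_ofReal (FF_ineq a b p)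
      _ = _ := by
        rw [lintegral_add_left (FF_meas a b), ← hp1, ← hp2, hs]
  have h5 := arctan_nonneg.2 ht
  rw [← ENNReal.ofReal_mul (by positivity)] at key
  have fin := measure_ne_top ((gaussianReal a 1).prod (gaussianReal b 1)) A
  have := (ENNReal.ofReal_le_iff_le_toReal (ENNReal.add_ne_top.2 ⟨fin, fin⟩)).1 key
  rw [ENNReal.toReal_add fin fin] at this
  linarith

end
end

section
/- Let f = f_n be the Boolean function on inputs ω ∈ {-1,1}^{2n+1}, indexed ω(−n),...,ω(n), computed by the convolutional iterated 3-majority network with stride 1 on the graph G_n^{(1)}: layer 0 holds the input, layer t (of width 2(n−t)+1, indexed −(n−t),...,n−t) has node value f(v_{t,i}) = maj(f(v_{t−1,i−1}), f(v_{t−1,i}), f(v_{t−1,i+1})), and f(ω) is the value of the single top node v_{n,0}. Then f equals the following 'closest pair' function g: let K be the smallest positive integer i such that ω(−i) = ω(−(i−1)) or ω(i−1) = ω(i), and set g(ω) = ω(−K) in the first case and g(ω) = ω(K) in the second case (these agree if both hold); if no such i ≤ n exists, set g(ω) = ω(n). -/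
noncomputable section

/-- Majority of three Boolean values. -/
def maj (a b c : Bool) : Bool := (a && b) || (a && c) || (b && c)

/-- The value of node `v_{t,i}` in the stride-1 convolutional iterated 3-majority network
`G_n^{(1)}` with input row `ω` (indexed by `ℤ`; only positions `-n,...,n` are relevant for the
output): `tval ω 0 i = ω i` and `tval ω (t+1) i = maj` of the three children below. -/
def tval (ω : ℤ → Bool) : ℕ → ℤ → Bool
  | 0, i => ω i
  | t + 1, i => maj (tval ω t (i - 1)) (tval ω t i) (tval ω t (i + 1))

theorem tval_step (ω : ℤ → Bool) (t : ℕ) : ∀ i : ℤ,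
    tval ω (t + 1) i = tval (fun j => maj (ω (j - 1)) (ω j) (ω (j + 1))) t i := by
  induction t with
  | zero => intro i; simp [tval]
  | succ t ih =>
    intro i
    rw [tval, ih, ih, ih]
    rfl

theorem tval_pair (ω : ℤ → Bool) (i : ℤ) (b : Bool) (h0 : ω i = b) (h1 : ω (i + 1) = b)
    (t : ℕ) : tval ω t i = b ∧ tval ω t (i + 1) = b := by
  induction t with
  | zero => exact ⟨h0, h1⟩
  | succ t ih =>
    obtain ⟨a, c⟩ := ih
    constructor
    · rw [tval, a, c]; cases b <;> simp [maj]
    · rw [tval, add_sub_cancel_right, a, c]; cases b <;> simp [maj]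

theorem maj_flip (a b c : Bool) (h : a ≠ b) (h' : b ≠ c) : maj a b c = !b := by
  revert a b c; decide

theorem maj_right (a b c : Bool) (h' : b = c) : maj a b c = c := by
  revert a b c; decide

theorem maj_left (a b c : Bool) (h' : a = b) : maj a b c = a := by
  revert a b c; decide

/-- interior flips -/
theorem flip_interior (ω : ℤ → Bool) (m : ℕ)
    (h : ∀ i : ℕ, 1 ≤ i → i ≤ m →
        ω (-(i : ℤ)) ≠ ω (-(i : ℤ) + 1) ∧ ω ((i : ℤ) - 1) ≠ ω (i : ℤ))
    (j : ℤ) (h1 : -(m : ℤ) < j) (h2 : j < m) :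
    maj (ω (j - 1)) (ω j) (ω (j + 1)) = !(ω j) := by
  have key : ∀ k : ℤ, -(m : ℤ) < k → k ≤ m → ω (k - 1) ≠ ω k := by
    intro k hk1 hk2
    rcases lt_or_ge 0 k with hk | hk
    · have := (h k.toNat (by omega) (by omega)).2
      rwa [Int.toNat_of_nonneg hk.le] at this
    · have := (h (1 - k).toNat (by omega) (by omega)).1
      rw [Int.toNat_of_nonneg (by omega)] at this
      rwa [show -(1 - k) = k - 1 by ring, show k - 1 + 1 = k by ring] at this
  apply maj_flip
  · exact key j h1 h2.le
  · have := key (j + 1) (by omega) (by omega)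
    rwa [add_sub_cancel_right] at this

theorem flip_alt (ω : ℤ → Bool) (m : ℕ)
    (h : ∀ i : ℕ, 1 ≤ i → i ≤ m + 1 →
        ω (-(i : ℤ)) ≠ ω (-(i : ℤ) + 1) ∧ ω ((i : ℤ) - 1) ≠ ω (i : ℤ)) 
    (W : ℤ → Bool) (hW : W = fun j => maj (ω (j - 1)) (ω j) (ω (j + 1))) :
    ∀ i : ℕ, 1 ≤ i → i ≤ m →
        W (-(i : ℤ)) ≠ W (-(i : ℤ) + 1) ∧ W ((i : ℤ) - 1) ≠ W (i : ℤ) := by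
  have hf : ∀ j : ℤ, -((m + 1 : ℕ) : ℤ) < j → j < (m + 1 : ℕ) → W j = !(ω j) := by
    intro j h1 h2
    rw [hW]
    exact flip_interior ω (m + 1) h j h1 h2
  intro i h1 h2
  rw [hf _ (by omega) (by omega), hf _ (by omega) (by omega), hf _ (by omega) (by omega),
    hf _ (by omega) (by omega)]
  have := h i h1 (by omega)
  simpa using this

/-- closest pair lemma: the iterated 3-majority with stride 1 on `G_n^{(1)}`,
i.e. `ω ↦ tval ω n 0` on inputs `ω(-n),...,ω(n)`, equals the closest pair function:
if `K ∈ {1,...,n}` is the smallest positive integer with `ω(-K) = ω(-(K-1))` or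
`ω(K-1) = ω(K)`, the output is `ω(-K)` (resp. `ω(K)`) in the respective case, and if no such
`K ≤ n` exists the output is `ω(n)`. -/
theorem iterated_three_majority_stride_one_eq_closest_pair (n : ℕ) (ω : ℤ → Bool) :
    (∀ K : ℕ, 1 ≤ K → K ≤ n →
      (∀ i : ℕ, 1 ≤ i → i < K →
        ω (-(i : ℤ)) ≠ ω (-(i : ℤ) + 1) ∧ ω ((i : ℤ) - 1) ≠ ω (i : ℤ)) →
      ((ω (-(K : ℤ)) = ω (-(K : ℤ) + 1) → tval ω n 0 = ω (-(K : ℤ))) ∧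
        (ω ((K : ℤ) - 1) = ω (K : ℤ) → tval ω n 0 = ω (K : ℤ))))
    ∧
    ((∀ i : ℕ, 1 ≤ i → i ≤ n →
        ω (-(i : ℤ)) ≠ ω (-(i : ℤ) + 1) ∧ ω ((i : ℤ) - 1) ≠ ω (i : ℤ)) →
      tval ω n 0 = ω (n : ℤ)) := by
  induction n generalizing ω with
  | zero =>
    refine ⟨fun K h1 h2 => by omega, fun _ => rfl⟩
  | succ n ih =>
    rw [tval_step]
    obtain ⟨W, hW⟩ : ∃ W : ℤ → Bool, W = fun j => maj (ω (j - 1)) (ω j) (ω (j + 1)) := ⟨_, rfl⟩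
    rw [← hW]
    obtain ⟨ihA, ihB⟩ := ih W
    constructor
    · intro K hK1 hK2 halt
      obtain ⟨K, rfl⟩ : ∃ k, K = k + 1 := ⟨K - 1, by omega⟩
      rcases Nat.eq_zero_or_pos K with rfl | hK
      · constructor
        · intro h
          have := (tval_pair ω (-1) (ω (-1)) rfl (by simpa using h.symm) (n + 1)).2
          rw [hW, ← tval_step]
          simpa using this
        · intro h
          have := (tval_pair ω 0 (ω 1) (by simpa using h) (by simp) (n + 1)).1
          rw [hW, ← tval_step]
          simpa using this
      · obtain ⟨k, rfl⟩ : ∃ k, K = k + 1 := ⟨K - 1, by omega⟩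
        have halt' : ∀ i : ℕ, 1 ≤ i → i ≤ k + 1 →
            ω (-(i : ℤ)) ≠ ω (-(i : ℤ) + 1) ∧ ω ((i : ℤ) - 1) ≠ ω (i : ℤ) :=
          fun i a b => halt i a (by omega)
        have hW' := flip_alt ω k halt' W hW
        obtain ⟨cL, cR⟩ := ihA (k + 1) (by omega) (by omega) (fun i a b => hW' i a (by omega))
        obtain ⟨aL, aR⟩ := halt' (k + 1) (by omega) le_rfl
        have fl := flip_interior ω (k + 1) halt'
        constructor
        · intro h
          have e1 : W (-((k + 1 : ℕ) : ℤ)) = ω (-((k + 1 + 1 : ℕ) : ℤ)) := by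
            rw [hW]
            have e : -((k + 1 : ℕ) : ℤ) - 1 = -((k + 1 + 1 : ℕ) : ℤ) := by push_cast; ring
            simp only [e]
            apply maj_left
            rw [h]; congr 1
          have e2 : W (-((k + 1 : ℕ) : ℤ) + 1) = ω (-((k + 1 + 1 : ℕ) : ℤ)) := by
            rw [hW]
            have := fl (-((k + 1 : ℕ) : ℤ) + 1) (by omega) (by omega)
            simp only [this]
            rw [h, show -((k + 1 + 1 : ℕ) : ℤ) + 1 = -((k + 1 : ℕ) : ℤ) by push_cast; ring]
            exact (Bool.eq_not.mpr aL).symm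
          rw [cL (e1.trans e2.symm), e1]
        · intro h
          have e1 : W ((k + 1 : ℕ) : ℤ) = ω ((k + 1 + 1 : ℕ) : ℤ) := by
            rw [hW]
            have e : ((k + 1 : ℕ) : ℤ) + 1 = ((k + 1 + 1 : ℕ) : ℤ) := by push_cast; ring
            simp only [e]
            apply maj_right
            rw [← h]; congr 1; push_cast; ring
          have e2 : W (((k + 1 : ℕ) : ℤ) - 1) = ω ((k + 1 + 1 : ℕ) : ℤ) := by
            rw [hW]
            have := fl (((k + 1 : ℕ) : ℤ) - 1) (by omega) (by omega)
            simp only [this]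
            rw [← h, show ((k + 1 + 1 : ℕ) : ℤ) - 1 = ((k + 1 : ℕ) : ℤ) by push_cast; ring]
            exact (Bool.eq_not.mpr aR.symm).symm
          rw [cR (e2.trans e1.symm), e1]
    · intro halt
      rw [ihB (flip_alt ω n halt W hW), hW]
      have := flip_interior ω (n + 1) halt n (by omega) (by omega)
      simp only [this]
      have h2 := (halt (n + 1) (by omega) le_rfl).2
      rw [show ((n + 1 : ℕ) : ℤ) - 1 = (n : ℤ) by push_cast; ring] at h2
      exact (Bool.eq_not.mpr h2.symm).symm

end
end

section
/- Let G_{n,k,s} be the graph of the convolutional iterated (2k+1)-majority network with filter size 2k+1 and stride s ≥ 2: node v_{t,i} at layer t ≥ 1 has the 2k+1 children v_{t−1, s(i−1)+1}, ..., v_{t−1, s(i−1)+2k+1}. For a node u at layer t, its set of ancestors at layer t' > t consists of all nodes at layer t' from which u is reachable by descending through children. Then for every layer t and every set S of m ≤ 2k nodes at layer t that are consecutive (next to each other), the set of ancestors of S at any higher layer has cardinality at most 2k. -/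
open Finset

/-- The set of parents of node `j ≥ 1` (at some layer) in the convolutional iterated
`(2k+1)`-majority graph `G_{n,k,s}`: node `i` at the layer above is a parent of `j` iff
`j` is one of its `2k+1` children `s(i-1)+1, ..., s(i-1)+2k+1`. -/
def parents (k s j : ℕ) : Finset ℕ :=
  (Finset.range (j + 2)).filter fun i => 1 ≤ i ∧ s * (i - 1) + 1 ≤ j ∧ j ≤ s * (i - 1) + 2 * k + 1

/-- The set of parents of a set of nodes. -/
def parentSet (k s : ℕ) (S : Finset ℕ) : Finset ℕ := S.biUnion (parents k s)

theorem parentSet_step (k s : ℕ) (hk : 1 ≤ k) (hs : 2 ≤ s) (S : Finset ℕ)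
    (h : ∃ a, S ⊆ Finset.Icc a (a + 2 * k - 1)) :
    ∃ a, parentSet k s S ⊆ Finset.Icc a (a + 2 * k - 1) := by
  obtain ⟨a, ha⟩ := h
  rcases (parentSet k s S).eq_empty_or_nonempty with he | hne
  · exact ⟨0, by simp [he]⟩
  have key : ∀ i ∈ parentSet k s S,
      1 ≤ i ∧ s * (i - 1) + 2 ≤ a + 2 * k ∧ a ≤ s * (i - 1) + 2 * k + 1 := by
    intro i hi
    simp only [parentSet, parents, Finset.mem_biUnion, Finset.mem_filter] at hi
    obtain ⟨j, hj, -, h1, h2, h3⟩ := hi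
    have := Finset.mem_Icc.1 (ha hj)
    omega
  refine ⟨(parentSet k s S).min' hne, fun i hi => ?_⟩
  have hle := Finset.min'_le _ i hi
  obtain ⟨c1, -, c3⟩ := key _ (Finset.min'_mem _ hne)
  obtain ⟨i1, i2, -⟩ := key i hi
  generalize (parentSet k s S).min' hne = c at *
  rw [Finset.mem_Icc]
  refine ⟨hle, ?_⟩
  by_contra hcon
  obtain ⟨d, hd⟩ : ∃ d, i - 1 = (c - 1) + d := ⟨i - c, by omega⟩
  have hd2 : 2 * k ≤ d := by omega
  rw [hd, Nat.mul_add] at i2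
  have : 2 * d ≤ s * d := Nat.mul_le_mul_right d hs
  omega

/-- in the convolutional iterated `(2k+1)`-majority graph with stride `s ≥ 2`,
for every set `S` of `m ≤ 2k` consecutive nodes at some layer, the set of ancestors of `S` at
any higher layer (i.e. the `r`-fold parent set, `r ≥ 1`) has cardinality at most `2k`. -/
theorem card_ancestors_le_two_k (k s : ℕ) (hk : 1 ≤ k) (hs : 2 ≤ s)
    (u m : ℕ) (hu : 1 ≤ u) (hm1 : 1 ≤ m) (hm2 : m ≤ 2 * k) (r : ℕ) (hr : 1 ≤ r) :
    ((parentSet k s)^[r] (Finset.Icc u (u + m - 1))).card ≤ 2 * k := by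
  have key : ∀ r : ℕ, ∃ a, (parentSet k s)^[r] (Finset.Icc u (u + m - 1)) ⊆
      Finset.Icc a (a + 2 * k - 1) := by
    intro r
    induction r with
    | zero => exact ⟨u, Finset.Icc_subset_Icc le_rfl (by omega)⟩
    | succ n ih =>
      rw [Function.iterate_succ_apply']
      exact parentSet_step k s hk hs _ ih
  obtain ⟨a, ha⟩ := key r
  have := Finset.card_le_card ha
  rw [Nat.card_Icc] at this
  omega
end
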